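/- Let M be a horizontally linked R-module of G-dimension n with 0 < n < ∞. Then M is reduced G-perfect if and only if λM satisfies the condition S̃_n. -/

import Mathlib

open CategoryTheory

noncomputable section

universe u

/-- The `i`-th Ext group `Ext^i_R(M,N)`, as a type (with its `R`-module structure). -/
abbrev extM (R : Type u) [CommRing R] (i : ℕ) (M N : Type u) [AddCommGroup M] [Module R M]
    [AddCommGroup N] [Module R N] : Type u :=
  ((Ext R (ModuleCat.{u} R) i).obj (Opposite.op (ModuleCat.of R M))).obj (ModuleCat.of R N)

/-- The `i`-th Tor group `Tor^R_i(M,N)`, as a type. -/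
abbrev torM (R : Type u) [CommRing R] (i : ℕ) (M N : Type u) [AddCommGroup M] [Module R M]
    [AddCommGroup N] [Module R N] : Type u :=
  ((Tor (ModuleCat.{u} R) i).obj (ModuleCat.of R M)).obj (ModuleCat.of R N)

/-- The `i`-th local cohomology `H^i_I(M)`, as a type. -/
abbrev locCoh (R : Type u) [CommRing R] (I : Ideal R) (i : ℕ) (M : Type u) [AddCommGroup M]
    [Module R M] : Type u :=
  (localCohomology I i).obj (ModuleCat.of R M)

/-- A submodule `N ≤ M` is superfluous if `K ⊔ N = ⊤` implies `K = ⊤`. -/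
def Submodule.IsSuperfluous {R M : Type u} [CommRing R] [AddCommGroup M] [Module R M]
    (N : Submodule R M) : Prop :=
  ∀ K : Submodule R M, K ⊔ N = ⊤ → K = ⊤

/-- A minimal projective resolution of `M` by finitely generated projective modules:
each `P i → Ω^i M` is a projective cover (i.e. has superfluous kernel). -/
structure MinRes (R : Type u) [CommRing R] (M : Type u) [AddCommGroup M] [Module R M] where
  P : ℕ → ModuleCat.{u} R
  projective : ∀ i, Module.Projective R (P i)
  finite : ∀ i, Module.Finite R (P i)
  d : (i : ℕ) → (↥(P (i + 1)) →ₗ[R] ↥(P i))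
  ε : ↥(P 0) →ₗ[R] M
  surj : Function.Surjective ε
  exact0 : LinearMap.range (d 0) = LinearMap.ker ε
  exact : ∀ i, LinearMap.range (d (i + 1)) = LinearMap.ker (d i)
  min_eps : (LinearMap.ker ε).IsSuperfluous
  min_d : ∀ i, (LinearMap.ker (d i)).IsSuperfluous

namespace MinRes

variable {R M : Type u} [CommRing R] [AddCommGroup M] [Module R M]

/-- `T k F` is the Auslander-Bridger transpose `𝒯_{k+1} M = Tr Ω^k M`, computed as the
cokernel of `P_k* → P_{k+1}*`. -/
def T (F : MinRes R M) (k : ℕ) : Type u :=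
  (Module.Dual R ↥(F.P (k + 1))) ⧸ LinearMap.range (F.d k).dualMap

instance (F : MinRes R M) (k : ℕ) : AddCommGroup (F.T k) :=
  inferInstanceAs (AddCommGroup ((Module.Dual R ↥(F.P (k + 1))) ⧸
    LinearMap.range (F.d k).dualMap))

instance (F : MinRes R M) (k : ℕ) : Module R (F.T k) :=
  inferInstanceAs (Module R ((Module.Dual R ↥(F.P (k + 1))) ⧸
    LinearMap.range (F.d k).dualMap))

/-- The transpose `Tr M = coker(P₀* → P₁*)` computed from a minimal projective presentation. -/
abbrev Tr (F : MinRes R M) : Type u := F.T 0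

/-- `λM = ΩTr M`, realized as the image of `P₀* → P₁*` for a minimal projective
presentation `P₁ → P₀ → M → 0`. -/
def lambdaMod (F : MinRes R M) : Type u :=
  ↥(LinearMap.range (F.d 0).dualMap)

instance (F : MinRes R M) : AddCommGroup F.lambdaMod :=
  inferInstanceAs (AddCommGroup ↥(LinearMap.range (F.d 0).dualMap))

instance (F : MinRes R M) : Module R F.lambdaMod :=
  inferInstanceAs (Module R ↥(LinearMap.range (F.d 0).dualMap))

end MinRes

/-- `M` is a horizontally linked `R`-module, i.e. `M ≅ λλM`. -/
def IsHorizontallyLinked (R : Type u) [CommRing R] (M : Type u) [AddCommGroup M]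
    [Module R M] : Prop :=
  ∃ (F : MinRes R M) (G : MinRes R F.lambdaMod), Nonempty (G.lambdaMod ≃ₗ[R] M)

/-- `M` and `N` are horizontally linked to each other: `M ≅ λN` and `N ≅ λM`. -/
def MutuallyLinked (A : Type u) [CommRing A] (M N : Type u) [AddCommGroup M] [Module A M]
    [AddCommGroup N] [Module A N] : Prop :=
  ∃ (F : MinRes A M) (G : MinRes A N),
    Nonempty (F.lambdaMod ≃ₗ[A] N) ∧ Nonempty (G.lambdaMod ≃ₗ[A] M)

/-- `M` is linked to `N` by the ideal `c`: `c` annihilates both modules and they are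
horizontally linked to each other as `R ⧸ c`-modules. -/
def LinkedBy (R : Type u) [CommRing R] (c : Ideal R) (M N : Type u) [AddCommGroup M]
    [Module R M] [AddCommGroup N] [Module R N] : Prop :=
  ∃ (hM : Module.IsTorsionBySet R M c) (hN : Module.IsTorsionBySet R N c),
    letI := hM.module
    letI := hN.module
    MutuallyLinked (R ⧸ c) M N

/-- A stable module: no nonzero projective direct summand. -/
def IsStableModule (R : Type u) [CommRing R] (M : Type u) [AddCommGroup M] [Module R M] : Prop :=
  ∀ N : Submodule R M, Module.Projective R ↥N → (∃ N' : Submodule R M, IsCompl N N') → N = ⊥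

/-- `M` has G-dimension zero: `M` is finitely generated and reflexive,
and `Ext^i(M,R) = 0 = Ext^i(M*,R)` for all `i > 0`. -/
def IsGDimZero (R : Type u) [CommRing R] (M : Type u) [AddCommGroup M] [Module R M] : Prop :=
  Module.Finite R M ∧ Function.Bijective (Module.Dual.eval R M) ∧
    (∀ i : ℕ, 0 < i → Subsingleton (extM R i M R)) ∧
    (∀ i : ℕ, 0 < i → Subsingleton (extM R i (Module.Dual R M) R))

/-- `M` admits a resolution of length `≤ n` by modules of G-dimension zero. -/
def GDimLE (R : Type u) [CommRing R] : ℕ → ModuleCat.{u} R → Prop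
  | 0, M => IsGDimZero R ↥M
  | n + 1, M =>
    ∃ (G : ModuleCat.{u} R) (f : ↥G →ₗ[R] ↥M), IsGDimZero R ↥G ∧ Function.Surjective f ∧
      GDimLE R n (ModuleCat.of R ↥(LinearMap.ker f))

/-- The G-dimension of `M`: the minimal length of a resolution of `M` by modules of
G-dimension zero (`∞` if there is none). -/
def GDim (R : Type u) [CommRing R] (M : Type u) [AddCommGroup M] [Module R M] : ℕ∞ :=
  sInf {n : ℕ∞ | ∃ k : ℕ, n = k ∧ GDimLE R k (ModuleCat.of R M)}

/-- The reduced grade of `M`: `rgr M = inf{ i > 0 | Ext^i(M,R) ≠ 0 }`. -/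
def rgr (R : Type u) [CommRing R] (M : Type u) [AddCommGroup M] [Module R M] : ℕ∞ :=
  sInf {n : ℕ∞ | ∃ k : ℕ, n = k ∧ 0 < k ∧ ¬ Subsingleton (extM R k M R)}

/-- The grade of `M`: `gr M = inf{ i ≥ 0 | Ext^i(M,R) ≠ 0 }`. -/
def egrade (R : Type u) [CommRing R] (M : Type u) [AddCommGroup M] [Module R M] : ℕ∞ :=
  sInf {n : ℕ∞ | ∃ k : ℕ, n = k ∧ ¬ Subsingleton (extM R k M R)}

/-- `depth_I(M) = inf{ i | Ext^i(R/I, M) ≠ 0 }`; for `I` the maximal ideal of a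
local ring this is the depth of `M`. -/
def edepth (R : Type u) [CommRing R] (I : Ideal R) (M : Type u) [AddCommGroup M]
    [Module R M] : ℕ∞ :=
  sInf {n : ℕ∞ | ∃ k : ℕ, n = k ∧ ¬ Subsingleton (extM R k (R ⧸ I) M)}

/-- The depth of the local ring `R`. -/
def rdepth (R : Type u) [CommRing R] [IsLocalRing R] : ℕ∞ :=
  edepth R (IsLocalRing.maximalIdeal R) R

/-- `depth_{R_p}(M_p)`. -/
def locDepth (R : Type u) [CommRing R] (p : Ideal R) [p.IsPrime] (M : Type u) [AddCommGroup M]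
    [Module R M] : ℕ∞ :=
  edepth (Localization.AtPrime p) (IsLocalRing.maximalIdeal (Localization.AtPrime p))
    (LocalizedModule p.primeCompl M)

/-- `depth R_p`. -/
def locRingDepth (R : Type u) [CommRing R] (p : Ideal R) [p.IsPrime] : ℕ∞ :=
  rdepth (Localization.AtPrime p)

/-- `Gdim_{R_p}(M_p)`. -/
def locGDim (R : Type u) [CommRing R] (p : Ideal R) [p.IsPrime] (M : Type u) [AddCommGroup M]
    [Module R M] : ℕ∞ :=
  GDim (Localization.AtPrime p) (LocalizedModule p.primeCompl M)

/-- `rgr_{R_p}(M_p)`. -/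
def locRgr (R : Type u) [CommRing R] (p : Ideal R) [p.IsPrime] (M : Type u) [AddCommGroup M]
    [Module R M] : ℕ∞ :=
  rgr (Localization.AtPrime p) (LocalizedModule p.primeCompl M)

/-- `dim_{R_p}(M_p)`, the Krull dimension of the support of `M_p` over `R_p`. -/
def locDim (R : Type u) [CommRing R] (p : Ideal R) [p.IsPrime] (M : Type u) [AddCommGroup M]
    [Module R M] : WithBot ℕ∞ :=
  ringKrullDim ((Localization.AtPrime p) ⧸
    Module.annihilator (Localization.AtPrime p) (LocalizedModule p.primeCompl M))

/-- `M` satisfies the condition `S̃_k`: `depth_{R_p}(M_p) ≥ min{k, depth R_p}` for all primes. -/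
def Stilde (R : Type u) [CommRing R] (k : ℕ) (M : Type u) [AddCommGroup M] [Module R M] : Prop :=
  ∀ (p : Ideal R) (_ : p.IsPrime), min (k : ℕ∞) (locRingDepth R p) ≤ locDepth R p M

/-- `M` satisfies Serre's condition `(S_k)`:
`depth_{R_p}(M_p) ≥ min{k, dim_{R_p}(M_p)}` for all primes. -/
def SerreS (R : Type u) [CommRing R] (k : ℕ) (M : Type u) [AddCommGroup M] [Module R M] : Prop :=
  ∀ (p : Ideal R) (_ : p.IsPrime),
    min (k : WithBot ℕ∞) (locDim R p M) ≤ (locDepth R p M : WithBot ℕ∞)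

/-- `M` is a `k`-th syzygy module. -/
def IsKthSyzygy (R : Type u) [CommRing R] : ℕ → ModuleCat.{u} R → Prop
  | 0, _ => True
  | k + 1, M =>
    ∃ (P : ModuleCat.{u} R) (f : ↥M →ₗ[R] ↥P), Module.Projective R ↥P ∧ Module.Finite R ↥P ∧
      Function.Injective f ∧ IsKthSyzygy R k (ModuleCat.of R (↥P ⧸ LinearMap.range f))

/-- The `I`-torsion submodule `Γ_I(M) = { x | I^n x = 0 for some n }`. -/
def gammaTorsion (R : Type u) [CommRing R] (I : Ideal R) (M : Type u) [AddCommGroup M]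
    [Module R M] : Submodule R M where
  carrier := {x | ∃ n : ℕ, ∀ a ∈ I ^ n, a • x = 0}
  zero_mem' := ⟨0, fun a _ => smul_zero a⟩
  add_mem' := by
    rintro x y ⟨n, hn⟩ ⟨m, hm⟩
    exact ⟨n + m, fun a ha => by
      rw [smul_add, hn a (Ideal.pow_le_pow_right (Nat.le_add_right n m) ha),
        hm a (Ideal.pow_le_pow_right (Nat.le_add_left m n) ha), add_zero]⟩
  smul_mem' := by
    rintro c x ⟨n, hn⟩
    exact ⟨n, fun a ha => by rw [smul_comm, hn a ha, smul_zero]⟩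

/-- `N` has finite flat dimension (characterized by uniform vanishing of `Tor`). -/
def HasFiniteFlatDim (R : Type u) [CommRing R] (N : Type u) [AddCommGroup N] [Module R N] : Prop :=
  ∃ n : ℕ, ∀ i : ℕ, n < i → ∀ (M : ModuleCat.{u} R), Subsingleton (torM R i ↥M N)

/-- `N` has finite injective dimension (characterized by uniform vanishing of `Ext`). -/
def HasFiniteInjDim (R : Type u) [CommRing R] (N : Type u) [AddCommGroup N] [Module R N] : Prop :=
  ∃ n : ℕ, ∀ i : ℕ, n < i → ∀ (M : ModuleCat.{u} R), Subsingleton (extM R i ↥M N)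

/-- `K` is a semidualizing `R`-module. -/
def IsSemidualizing (R : Type u) [CommRing R] (K : Type u) [AddCommGroup K] [Module R K] : Prop :=
  Module.Finite R K ∧ Function.Bijective (LinearMap.lsmul R K) ∧
    ∀ i : ℕ, 0 < i → Subsingleton (extM R i K K)

/-- The biduality map `M → Hom(Hom(M,K),K)`. -/
def evalK (R : Type u) [CommRing R] (K M : Type u) [AddCommGroup K] [Module R K]
    [AddCommGroup M] [Module R M] : M →ₗ[R] ((M →ₗ[R] K) →ₗ[R] K) :=
  LinearMap.applyₗ

/-- `M` has `G_K`-dimension zero. -/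
def IsGKDimZero (R : Type u) [CommRing R] (K M : Type u) [AddCommGroup K] [Module R K]
    [AddCommGroup M] [Module R M] : Prop :=
  Module.Finite R M ∧ Function.Bijective (evalK R K M) ∧
    (∀ i : ℕ, 0 < i → Subsingleton (extM R i M K)) ∧
    (∀ i : ℕ, 0 < i → Subsingleton (extM R i (M →ₗ[R] K) K))

/-- `M` admits a resolution of length `≤ n` by modules of `G_K`-dimension zero. -/
def GKDimLE (R : Type u) [CommRing R] (K : Type u) [AddCommGroup K] [Module R K] :
    ℕ → ModuleCat.{u} R → Prop
  | 0, M => IsGKDimZero R K ↥M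
  | n + 1, M =>
    ∃ (G : ModuleCat.{u} R) (f : ↥G →ₗ[R] ↥M), IsGKDimZero R K ↥G ∧ Function.Surjective f ∧
      GKDimLE R K n (ModuleCat.of R ↥(LinearMap.ker f))

/-- The `G_K`-dimension of `M`. -/
def GKDim (R : Type u) [CommRing R] (K M : Type u) [AddCommGroup K] [Module R K]
    [AddCommGroup M] [Module R M] : ℕ∞ :=
  sInf {n : ℕ∞ | ∃ k : ℕ, n = k ∧ GKDimLE R K k (ModuleCat.of R M)}

/-- The grade of a module, `gr_R(M) = grade(Ann_R(M), R) = inf{i | Ext^i(R/Ann M, R) ≠ 0}`. -/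
def grAnn (R : Type u) [CommRing R] (M : Type u) [AddCommGroup M] [Module R M] : ℕ∞ :=
  egrade R (R ⧸ Module.annihilator R M)

/-- The grade of an ideal, `grade(I) = inf{i | Ext^i(R/I, R) ≠ 0}`. -/
def gradeI (R : Type u) [CommRing R] (I : Ideal R) : ℕ∞ :=
  egrade R (R ⧸ I)

/-- The ideal `I` is `G_K`-Gorenstein: `R/I` is `G_K`-perfect and `Ext^{gr I}(R/I, K)` is
cyclic. -/
def IsGKGorensteinIdeal (R : Type u) [CommRing R] (K : Type u) [AddCommGroup K] [Module R K]
    (I : Ideal R) : Prop :=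
  ∃ n : ℕ, grAnn R (R ⧸ I) = (n : ℕ∞) ∧ GKDim R K (R ⧸ I) = (n : ℕ∞) ∧
    ∃ x : extM R n (R ⧸ I) K, Submodule.span R {x} = ⊤

end

/-!
Since `Gdim M = n > 0`, the equality `rgr M = n` means that `Ext^i(M, R) = 0` for `0 < i < n`.
Let `P` be a resolution of `M` by finitely generated projectives, `B j` the image of
`P j* → P (j + 1)*` and `T j = P (j + 1)* ⧸ B j` its cokernel, so that `B 0 = λM`.

If these `Ext` modules vanish, the sequences `0 → B j → P (j + 1)* → B (j + 1) → 0` are exact for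
`j + 1 < n`, and counting depths along them gives `S̃_n` for `B 0`.

Conversely, let `a + 1 < n` be minimal with `Ext^{a+1}(M, R) ≠ 0`, and choose an associated prime
`p` of `Ext^{a+1}(M, R) ⊆ T a`. As `M` is a submodule of a projective module,
`depth M_p ≥ min (1, depth R_p)`, and the Auslander–Bridger inequality
`Gdim M_p ≤ depth R_p - depth M_p` forces `depth R_p ≥ a + 2`. Now `S̃_n` gives
`depth (B 0)_p ≥ a + 2`; the same exact sequences, available for `j < a`, yield
`depth (B a)_p ≥ 2`, hence `depth (T a)_p ≥ 1`, contradicting `p ∈ Ass (T a)`.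

The Auslander–Bridger inequality rests on the bijectivity of
`Ext^d(K, Y) → Hom(Y*, Ext^d(K, R))` for `Y` of G-dimension zero and `K` with `Ext^t(K, R) = 0`
for all `t < d`: when `K` is the residue field, it detects whether a map of such modules has
surjective dual.
-/

universe u

section ExtFunctor

variable {R : Type u} [CommRing R] {X : ModuleCat.{u} R} (P : ProjectiveResolution X)
  (Y : ModuleCat.{u} R)

theorem subsingleton_extFunctor_succ_iff (i : ℕ) :
    Subsingleton (((Ext R (ModuleCat.{u} R) (i + 1)).obj (.op X)).obj Y) ↔
      ∀ f : P.complex.X (i + 1) ⟶ Y, P.complex.d (i + 2) (i + 1) ≫ f = 0 →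
        ∃ g : P.complex.X i ⟶ Y, P.complex.d (i + 1) i ≫ g = f := by
  rw [← ModuleCat.isZero_iff_subsingleton, (P.isoExt (R := R) (i + 1) Y).isZero_iff,
    ← HomologicalComplex.exactAt_iff_isZero_homology,
    HomologicalComplex.exactAt_iff' _ i (i + 1) (i + 2) (by simp) (by simp),
    ShortComplex.moduleCat_exact_iff]
  rfl

theorem subsingleton_extFunctor_zero_iff :
    Subsingleton (((Ext R (ModuleCat.{u} R) 0).obj (.op X)).obj Y) ↔
      ∀ f : P.complex.X 0 ⟶ Y, P.complex.d 1 0 ≫ f = 0 → f = 0 := by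
  have incoming_eq_zero : ((P.complex.linearYonedaObj R Y).sc' 0 0 1).f = 0 :=
    (P.complex.linearYonedaObj R Y).shape 0 0 (Nat.succ_ne_zero 0)
  rw [← ModuleCat.isZero_iff_subsingleton, (P.isoExt (R := R) 0 Y).isZero_iff,
    ← HomologicalComplex.exactAt_iff_isZero_homology,
    HomologicalComplex.exactAt_iff' _ 0 0 1 CochainComplex.prev_nat_zero (by simp),
    ShortComplex.moduleCat_exact_iff]
  refine forall₂_congr fun f _ ↦ ?_
  rw [incoming_eq_zero]
  exact ⟨fun ⟨_, hg⟩ ↦ hg.symm, fun hf ↦ ⟨0, hf.symm⟩⟩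

theorem subsingleton_ext_succ_iff (i : ℕ) :
    Subsingleton (Abelian.Ext X Y (i + 1)) ↔
      ∀ f : P.complex.X (i + 1) ⟶ Y, P.complex.d (i + 2) (i + 1) ≫ f = 0 →
        ∃ g : P.complex.X i ⟶ Y, P.complex.d (i + 1) i ≫ g = f := by
  refine ⟨fun _ f hf ↦ (P.extMk_eq_zero_iff f _ rfl hf i rfl).1 (Subsingleton.elim _ _),
    fun h ↦ subsingleton_of_forall_eq 0 fun x ↦ ?_⟩
  obtain ⟨f, hf, rfl⟩ := P.extMk_surjective x (i + 2) rfl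
  exact (P.extMk_eq_zero_iff f _ rfl hf i rfl).2 (h f hf)

theorem subsingleton_ext_zero_iff :
    Subsingleton (Abelian.Ext X Y 0) ↔
      ∀ f : P.complex.X 0 ⟶ Y, P.complex.d 1 0 ≫ f = 0 → f = 0 := by
  have : Epi (P.π.f 0) := inferInstance
  rw [Abelian.Ext.homEquiv₀.subsingleton_congr]
  change Subsingleton (((ChainComplex.single₀ (ModuleCat.{u} R)).obj X).X 0 ⟶ Y) ↔ _
  constructor
  · intro h f hf
    obtain ⟨g, rfl⟩ : ∃ g, P.π.f 0 ≫ g = f := ⟨_, P.exact₀.g_desc f hf⟩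
    rw [Subsingleton.elim g 0, Limits.comp_zero]
  · refine fun h ↦ ⟨fun g g' ↦ sub_eq_zero.1 ?_⟩
    rw [← cancel_epi (P.π.f 0), Limits.comp_zero]
    exact h _ (by rw [P.complex_d_comp_π_f_zero_assoc, Limits.zero_comp])

theorem subsingleton_extFunctor_iff (i : ℕ) :
    Subsingleton (((Ext R (ModuleCat.{u} R) i).obj (.op X)).obj Y) ↔
      Subsingleton (Abelian.Ext X Y i) := by
  let P := projectiveResolution X
  cases i with
  | zero =>
    rw [subsingleton_extFunctor_zero_iff P, subsingleton_ext_zero_iff P]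
  | succ i =>
    rw [subsingleton_extFunctor_succ_iff P, subsingleton_ext_succ_iff P]

end ExtFunctor

section ShortExact

variable {R A B C N K : Type u} [CommRing R] [AddCommGroup A] [Module R A]
  [AddCommGroup B] [Module R B] [AddCommGroup C] [Module R C] [AddCommGroup N] [Module R N]
  [AddCommGroup K] [Module R K]

/-- `0 → A → B → C → 0` is a short exact sequence of modules, with maps `f` and `g`. -/
structure IsShortExact (f : A →ₗ[R] B) (g : B →ₗ[R] C) : Prop where
  injective : Function.Injective f
  exact : Function.Exact f g
  surjective : Function.Surjective g

theorem isShortExact_subtype_ker {g : B →ₗ[R] C} (hg : Function.Surjective g) :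
    IsShortExact (LinearMap.ker g).subtype g :=
  ⟨Subtype.val_injective, LinearMap.exact_subtype_ker_map g, hg⟩

theorem isShortExact_mkQ_range {f : A →ₗ[R] B} (hf : Function.Injective f) :
    IsShortExact f (LinearMap.range f).mkQ :=
  ⟨hf, LinearMap.exact_map_mkQ_range f, Submodule.mkQ_surjective _⟩

/-- `Ext^i_R(M, N) = 0`. Here `Abelian.Ext` is used rather than the derived functor `Ext` behind
`extM`, because it comes with long exact sequences in both variables. -/
abbrev ExtVanishes (R : Type u) [CommRing R] (i : ℕ) (M N : Type u) [AddCommGroup M] [Module R M]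
    [AddCommGroup N] [Module R N] : Prop :=
  Subsingleton (Abelian.Ext (ModuleCat.of R M) (ModuleCat.of R N) i)

theorem subsingleton_extM_iff {i : ℕ} : Subsingleton (extM R i A N) ↔ ExtVanishes R i A N :=
  subsingleton_extFunctor_iff _ i

theorem forall_pos_subsingleton_extM_iff :
    (∀ i : ℕ, 0 < i → Subsingleton (extM R i A N)) ↔ ∀ i : ℕ, ExtVanishes R (i + 1) A N := by
  simp only [subsingleton_extM_iff]
  exact ⟨fun h i ↦ h _ i.succ_pos, fun h i hi ↦ Nat.succ_pred_eq_of_pos hi ▸ h _⟩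

namespace IsShortExact

open Abelian

variable {f : A →ₗ[R] B} {g : B →ₗ[R] C}

theorem comp_eq_zero (S : IsShortExact f g) : g ∘ₗ f = 0 :=
  S.exact.linearMap_comp_eq_zero

theorem shortComplex_shortExact (S : IsShortExact f g) :
    (ModuleCat.shortComplexOfCompEqZero f g S.comp_eq_zero).ShortExact :=
  ModuleCat.shortComplex_shortExact _ S.exact S.injective S.surjective

theorem extVanishes_right_left (S : IsShortExact f g) {i : ℕ}
    (hA : ExtVanishes R i A N) (hB : ExtVanishes R (i + 1) B N) :
    ExtVanishes R (i + 1) C N := by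
  refine subsingleton_of_forall_eq 0 fun x ↦ ?_
  obtain ⟨y, rfl⟩ := Ext.contravariant_sequence_exact₃ S.shortComplex_shortExact _ x
    (Subsingleton.elim (h := hB) _ _) (n₀ := i) (add_comm _ _)
  rw [Subsingleton.elim (h := hA) y 0, Ext.comp_zero]

theorem extVanishes_left_left (S : IsShortExact f g) {i : ℕ}
    (hB : ExtVanishes R i B N) (hC : ExtVanishes R (i + 1) C N) :
    ExtVanishes R i A N := by
  refine subsingleton_of_forall_eq 0 fun x ↦ ?_
  obtain ⟨y, rfl⟩ := Ext.contravariant_sequence_exact₁ S.shortComplex_shortExact _ x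
    (n₁ := i + 1) (add_comm _ _) (Subsingleton.elim (h := hC) _ _)
  rw [Subsingleton.elim (h := hB) y 0, Ext.comp_zero]

theorem extVanishes_one (S : IsShortExact f g) (hf : Function.Surjective (f.lcomp R N))
    (hB : ExtVanishes R 1 B N) :
    ExtVanishes R 1 C N := by
  refine subsingleton_of_forall_eq 0 fun x ↦ ?_
  obtain ⟨y, rfl⟩ := Ext.contravariant_sequence_exact₃ S.shortComplex_shortExact _ x
    (Subsingleton.elim (h := hB) _ _) (n₀ := 0) (add_comm _ _)
  obtain ⟨φ, rfl⟩ := Ext.homEquiv₀.symm.surjective y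
  obtain ⟨ψ, hψ⟩ := hf φ.hom
  obtain rfl : ModuleCat.ofHom f ≫ ModuleCat.ofHom ψ = φ := ModuleCat.hom_ext hψ
  rw [Ext.homEquiv₀_symm_apply, ← Ext.mk₀_comp_mk₀]
  exact S.shortComplex_shortExact.extClass_comp_assoc _

theorem lcomp_surjective (S : IsShortExact f g) (hC : ExtVanishes R 1 C N) :
    Function.Surjective (f.lcomp R N) := by
  intro φ
  obtain ⟨y, hy⟩ := Ext.contravariant_sequence_exact₁ S.shortComplex_shortExact _
    (Ext.mk₀ (ModuleCat.ofHom φ)) (n₁ := 1) rfl (Subsingleton.elim (h := hC) _ _)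
  obtain ⟨ψ, rfl⟩ := Ext.homEquiv₀.symm.surjective y
  rw [Ext.homEquiv₀_symm_apply, Ext.mk₀_comp_mk₀] at hy
  exact ⟨ψ.hom, congrArg ModuleCat.Hom.hom (Ext.homEquiv₀.symm.injective hy)⟩

theorem dualMap (S : IsShortExact f g) (hf : Function.Surjective f.dualMap) :
    IsShortExact g.dualMap f.dualMap :=
  ⟨LinearMap.dualMap_injective_of_surjective S.surjective,
    LinearMap.exact_lcomp_of_exact_of_surjective R S.exact S.surjective, hf⟩

end IsShortExact

section ExtMap

open Abelian

/-- The map `Ext^i(K, A) → Ext^i(K, B)` induced by a linear map `A → B`, as a linear function of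
the latter. -/
noncomputable def extMap (K : Type u) [AddCommGroup K] [Module R K] (i : ℕ) :
    (A →ₗ[R] B) →ₗ[R] Ext (ModuleCat.of R K) (ModuleCat.of R A) i →ₗ[R]
      Ext (ModuleCat.of R K) (ModuleCat.of R B) i :=
  (Ext.bilinearCompOfLinear R _ _ _ i 0 i (add_zero i)).flip ∘ₗ
    ((ModuleCat.homLinearEquiv (M := ModuleCat.of R A) (N := ModuleCat.of R B) (S := R)).symm ≪≫ₗ
      (Ext.linearEquiv₀ (R := R)).symm).toLinearMap

theorem extMap_apply (i : ℕ) (f : A →ₗ[R] B)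
    (x : Ext (ModuleCat.of R K) (ModuleCat.of R A) i) :
    extMap K i f x = x.comp (Ext.mk₀ (ModuleCat.ofHom f)) (add_zero i) :=
  rfl

theorem extMap_comp (i : ℕ) (g : B →ₗ[R] C) (f : A →ₗ[R] B) :
    extMap K i (g ∘ₗ f) = extMap K i g ∘ₗ extMap K i f := by
  ext x
  simp [extMap_apply]

theorem extMap_id (i : ℕ) : extMap K i (LinearMap.id : A →ₗ[R] A) = LinearMap.id := by
  ext x
  simp [extMap_apply]

theorem IsShortExact.extMap_injective {f : A →ₗ[R] B} {g : B →ₗ[R] C} (S : IsShortExact f g)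
    {i : ℕ} (hC : ∀ j, j + 1 = i → ExtVanishes R j K C) : Function.Injective (extMap K i f) := by
  cases i with
  | zero =>
    have : Mono (ModuleCat.ofHom f) := (ModuleCat.mono_iff_injective _).2 S.injective
    exact Ext.postcomp_mk₀_injective_of_mono (ModuleCat.of R K) (ModuleCat.ofHom f)
  | succ i =>
    refine (injective_iff_map_eq_zero _).2 fun x hx ↦ ?_
    obtain ⟨y, rfl⟩ := Ext.covariant_sequence_exact₁ _ S.shortComplex_shortExact x hx (n₀ := i) rfl
    rw [Subsingleton.elim (h := hC i rfl) y 0, Ext.zero_comp]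

theorem IsShortExact.exact_extMap {f : A →ₗ[R] B} {g : B →ₗ[R] C} (S : IsShortExact f g)
    (i : ℕ) : Function.Exact (extMap K i f) (extMap K i g) := by
  refine LinearMap.exact_of_comp_of_mem_range ?_ fun x hx ↦
    Ext.covariant_sequence_exact₂ _ S.shortComplex_shortExact x hx
  rw [← extMap_comp, S.comp_eq_zero, map_zero]

theorem IsShortExact.extVanishes_left_right {f : A →ₗ[R] B} {g : B →ₗ[R] C} (S : IsShortExact f g)
    {i : ℕ} (hB : ExtVanishes R i K B) (hC : ∀ j, j + 1 = i → ExtVanishes R j K C) :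
    ExtVanishes R i K A :=
  ⟨fun _ _ ↦ S.extMap_injective hC (Subsingleton.elim (h := hB) _ _)⟩

theorem IsShortExact.extVanishes_right_right {f : A →ₗ[R] B} {g : B →ₗ[R] C}
    (S : IsShortExact f g) {i : ℕ} (hB : ExtVanishes R i K B) (hA : ExtVanishes R (i + 1) K A) :
    ExtVanishes R i K C := by
  refine subsingleton_of_forall_eq 0 fun x ↦ ?_
  obtain ⟨y, rfl⟩ := Ext.covariant_sequence_exact₃ _ S.shortComplex_shortExact x
    (n₁ := i + 1) rfl (Subsingleton.elim (h := hA) _ _)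
  rw [Subsingleton.elim (h := hB) y 0, Ext.zero_comp]

theorem eq_zero_of_extMap_proj_eq_zero {q i : ℕ}
    {x : Ext (ModuleCat.of R K) (ModuleCat.of R (Fin q → A)) i}
    (hx : ∀ j, extMap K i (LinearMap.proj (R := R) (φ := fun _ : Fin q ↦ A) j) x = 0) : x = 0 := by
  have id_eq_sum : (LinearMap.id : (Fin q → A) →ₗ[R] _) =
      ∑ j, LinearMap.single R (fun _ ↦ A) j ∘ₗ LinearMap.proj j := by
    ext j a l
    simp [Pi.single_apply]
  rw [← LinearMap.id_apply (R := R) x, ← extMap_id, id_eq_sum, map_sum, LinearMap.sum_apply]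
  refine Finset.sum_eq_zero fun j _ ↦ ?_
  rw [extMap_comp, LinearMap.comp_apply, hx, map_zero]

theorem smul_ext_quotient_eq_zero {I : Ideal R} {a : R} (ha : a ∈ I) {i : ℕ}
    (x : Ext (ModuleCat.of R (R ⧸ I)) (ModuleCat.of R A) i) : a • x = 0 := by
  have quotient_torsion : Module.IsTorsionBySet R (R ⧸ I) I :=
    (Module.isTorsionBySet_quotient_iff I I).2 fun _ _ hr ↦ I.mul_mem_right _ hr
  have smul_id : a • 𝟙 (ModuleCat.of R (R ⧸ I)) = 0 :=
    ModuleCat.hom_ext <| LinearMap.ext fun y ↦ @quotient_torsion y ⟨a, ha⟩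
  rw [← Ext.mk₀_id_comp x, ← Ext.smul_comp, ← Ext.mk₀_smul, smul_id, Ext.mk₀_zero, Ext.zero_comp]

end ExtMap

namespace ExtVanishes

open Abelian

theorem of_projective [Module.Projective R A] (i : ℕ) : ExtVanishes R (i + 1) A N := by
  have : Projective (ModuleCat.of R A) := (IsProjective.iff_projective A).1 inferInstance
  exact Ext.subsingleton_of_projective _ _ _

theorem congr_left (e : A ≃ₗ[R] B) {i : ℕ} (h : ExtVanishes R i A N) : ExtVanishes R i B N := by
  refine subsingleton_of_forall_eq 0 fun x ↦ ?_
  rw [← Ext.mk₀_id_comp x, ← e.toModuleIso.inv_hom_id, ← Ext.mk₀_comp_mk₀_assoc,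
    Subsingleton.elim (h := h) ((Ext.mk₀ e.toModuleIso.hom).comp x (zero_add i)) 0, Ext.comp_zero]

end ExtVanishes

theorem extVanishes_zero_iff : ExtVanishes R 0 K A ↔ Subsingleton (K →ₗ[R] A) :=
  (Abelian.Ext.homEquiv₀.trans ModuleCat.homEquiv).subsingleton_congr

theorem ExtVanishes.pi {i : ℕ} (q : ℕ) (h : ExtVanishes R i K A) : ExtVanishes R i K (Fin q → A) :=
  subsingleton_of_forall_eq 0 fun _ ↦
    eq_zero_of_extMap_proj_eq_zero fun _ ↦ Subsingleton.elim (h := h) _ _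

end ShortExact

section Grade

variable {R K A B C : Type u} [CommRing R] [AddCommGroup K] [Module R K]
  [AddCommGroup A] [Module R A] [AddCommGroup B] [Module R B] [AddCommGroup C] [Module R C]

/-- `grade(K, M) ≥ d`, i.e. `Ext^t(K, M) = 0` for all `t < d`. When `K` is the residue field of a
local ring this says `depth M ≥ d`. -/
def GradeGE (R : Type u) [CommRing R] (K M : Type u) [AddCommGroup K] [Module R K]
    [AddCommGroup M] [Module R M] (d : ℕ) : Prop :=
  ∀ t < d, ExtVanishes R t K M

theorem le_edepth_iff {I : Ideal R} {d : ℕ} : (d : ℕ∞) ≤ edepth R I A ↔ GradeGE R (R ⧸ I) A d := by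
  simp only [edepth, le_sInf_iff, Set.mem_ofPred_eq, forall_exists_index, and_imp, GradeGE,
    ← subsingleton_extM_iff]
  constructor
  · intro h t ht
    by_contra ht'
    exact absurd (h t t rfl ht') (by simpa using ht)
  · rintro h _ t rfl ht'
    by_contra! ht
    exact ht' (h t (by simpa using ht))

theorem gradeGE_zero : GradeGE R K A 0 :=
  fun _ ht ↦ absurd ht (Nat.not_lt_zero _)

theorem GradeGE.mono {d e : ℕ} (h : GradeGE R K A d) (hed : e ≤ d) : GradeGE R K A e :=
  fun t ht ↦ h t (ht.trans_le hed)

theorem GradeGE.pi {d : ℕ} (h : GradeGE R K A d) (q : ℕ) : GradeGE R K (Fin q → A) d :=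
  fun t ht ↦ (h t ht).pi q

namespace IsShortExact

variable {f : A →ₗ[R] B} {g : B →ₗ[R] C}

theorem gradeGE_left (S : IsShortExact f g) {d : ℕ} (hB : GradeGE R K B d)
    (hC : GradeGE R K C (d - 1)) : GradeGE R K A d :=
  fun t ht ↦ S.extVanishes_left_right (hB t ht) fun j hj ↦ hC j (by lia)

theorem gradeGE_right (S : IsShortExact f g) {d : ℕ} (hB : GradeGE R K B d)
    (hA : GradeGE R K A (d + 1)) : GradeGE R K C d :=
  fun t ht ↦ S.extVanishes_right_right (hB t ht) (hA (t + 1) (by lia))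

theorem extMap_injective_of_gradeGE (S : IsShortExact f g) {d : ℕ} (hC : GradeGE R K C d) :
    Function.Injective (extMap K d f) :=
  S.extMap_injective fun j hj ↦ hC j (by lia)

end IsShortExact

theorem GradeGE.of_injective {f : A →ₗ[R] B} (hf : Function.Injective f)
    (hB : GradeGE R K B 1) : GradeGE R K A 1 :=
  (isShortExact_mkQ_range hf).gradeGE_left hB gradeGE_zero

end Grade

section GDimZero

variable {R L G M : Type u} [CommRing R] [AddCommGroup L] [Module R L] [AddCommGroup G]
  [Module R G] [AddCommGroup M] [Module R M]

theorem isGDimZero_iff : IsGDimZero R M ↔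
    Module.Finite R M ∧ Function.Bijective (Module.Dual.eval R M) ∧
      (∀ i : ℕ, ExtVanishes R (i + 1) M R) ∧
      ∀ i : ℕ, ExtVanishes R (i + 1) (Module.Dual R M) R := by
  rw [IsGDimZero, forall_pos_subsingleton_extM_iff, forall_pos_subsingleton_extM_iff]

theorem IsGDimZero.extVanishes (h : IsGDimZero R M) (i : ℕ) : ExtVanishes R (i + 1) M R :=
  (isGDimZero_iff.1 h).2.2.1 i

theorem IsGDimZero.extVanishes_dual (h : IsGDimZero R M) (i : ℕ) :
    ExtVanishes R (i + 1) (Module.Dual R M) R :=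
  (isGDimZero_iff.1 h).2.2.2 i

theorem isGDimZero_of_projective (M : Type u) [AddCommGroup M] [Module R M] [Module.Finite R M]
    [Module.Projective R M] : IsGDimZero R M :=
  isGDimZero_iff.2 ⟨inferInstance, Module.bijective_dual_eval R M, ExtVanishes.of_projective,
    ExtVanishes.of_projective⟩

theorem IsShortExact.bijective_dual_eval {f : L →ₗ[R] G} {g : G →ₗ[R] M} (S : IsShortExact f g)
    (hL : Function.Surjective (Module.Dual.eval R L))
    (hG : Function.Bijective (Module.Dual.eval R G)) (hf : Function.Surjective f.dualMap)
    (hg : Function.Surjective g.dualMap.dualMap) :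
    Function.Bijective (Module.Dual.eval R M) := by
  refine ⟨(injective_iff_map_eq_zero _).2 fun m hm ↦ ?_, fun φ ↦ ?_⟩
  · obtain ⟨y, rfl⟩ := S.surjective m
    obtain ⟨l', hl'⟩ := ((S.dualMap hf).dualMap hg).exact _ |>.1
      (show g.dualMap.dualMap (Module.Dual.eval R G y) = 0 from hm)
    obtain ⟨l, rfl⟩ := hL l'
    rw [← hG.1 (show Module.Dual.eval R G (f l) = Module.Dual.eval R G y from hl'),
      S.exact.apply_apply_eq_zero]
  · obtain ⟨ψ, rfl⟩ := hg φ
    obtain ⟨y, rfl⟩ := hG.2 ψ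
    exact ⟨g y, rfl⟩

theorem IsShortExact.isGDimZero_right {f : L →ₗ[R] G} {g : G →ₗ[R] M} (S : IsShortExact f g)
    (hL : IsGDimZero R L) (hG : IsGDimZero R G) (hf : Function.Surjective f.dualMap) :
    IsGDimZero R M := by
  have : Module.Finite R G := hG.1
  have S' := S.dualMap hf
  refine isGDimZero_iff.2 ⟨.of_surjective g S.surjective,
    S.bijective_dual_eval hL.2.1.2 hG.2.1 hf (S'.lcomp_surjective (hL.extVanishes_dual 0)), ?_,
    fun i ↦ S'.extVanishes_left_left (hG.extVanishes_dual i) (hL.extVanishes_dual (i + 1))⟩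
  rintro (_ | i)
  · exact S.extVanishes_one hf (hG.extVanishes 0)
  · exact S.extVanishes_right_left (hL.extVanishes i) (hG.extVanishes (i + 1))

theorem IsGDimZero.congr (e : L ≃ₗ[R] M) (h : IsGDimZero R L) : IsGDimZero R M := by
  have : Module.Finite R L := h.1
  refine isGDimZero_iff.2 ⟨.equiv e, ?_, fun i ↦ (h.extVanishes i).congr_left e,
    fun i ↦ (h.extVanishes_dual i).congr_left e.symm.dualMap⟩
  have eval_eq : ⇑(Module.Dual.eval R M) =
      e.symm.dualMap.symm.dualMap ∘ Module.Dual.eval R L ∘ e.symm := by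
    ext m φ
    simp [LinearEquiv.dualMap_apply]
  rw [eval_eq]
  exact (LinearEquiv.bijective _).comp (h.2.1.comp e.symm.bijective)

theorem GDimLE.congr {n : ℕ} (e : L ≃ₗ[R] M) (h : GDimLE R n (ModuleCat.of R L)) :
    GDimLE R n (ModuleCat.of R M) := by
  cases n with
  | zero => exact IsGDimZero.congr e h
  | succ n =>
    obtain ⟨G, f, hG, hf, hker⟩ := h
    refine ⟨G, e.toLinearMap ∘ₗ f, hG, e.surjective.comp hf, ?_⟩
    rwa [LinearEquiv.ker_comp]

theorem IsShortExact.gDimLE_succ {f : L →ₗ[R] G} {g : G →ₗ[R] M} (S : IsShortExact f g) {n : ℕ}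
    (hG : IsGDimZero R G) (hL : GDimLE R n (ModuleCat.of R L)) :
    GDimLE R (n + 1) (ModuleCat.of R M) :=
  ⟨ModuleCat.of R G, g, hG, S.surjective,
    hL.congr (.ofInjective f S.injective ≪≫ₗ .ofEq _ _ S.exact.linearMap_ker_eq.symm)⟩

theorem GDimLE.exists_isShortExact {n : ℕ} (h : GDimLE R (n + 1) (ModuleCat.of R M)) :
    ∃ (L G : ModuleCat.{u} R) (f : L →ₗ[R] G) (g : G →ₗ[R] M),
      IsShortExact f g ∧ IsGDimZero R G ∧ GDimLE R n (ModuleCat.of R L) := by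
  obtain ⟨G, g, hG, hg, hker⟩ := h
  exact ⟨.of R (LinearMap.ker g), G, _, g, isShortExact_subtype_ker hg, hG, hker⟩

theorem GDimLE.extVanishes {n : ℕ} (h : GDimLE R n (ModuleCat.of R M)) (i : ℕ) :
    ExtVanishes R (n + i + 1) M R := by
  induction n generalizing M with
  | zero => exact IsGDimZero.extVanishes h _
  | succ n ih =>
    obtain ⟨L, G, f, g, S, hG, hL⟩ := h.exists_isShortExact
    rw [Nat.add_right_comm n 1 i]
    exact S.extVanishes_right_left (ih hL) (hG.extVanishes _)

theorem GDimLE.isGDimZero {n : ℕ} (h : GDimLE R n (ModuleCat.of R M))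
    (hM : ∀ i, ExtVanishes R (i + 1) M R) : IsGDimZero R M := by
  induction n generalizing M with
  | zero => exact h
  | succ n ih =>
    obtain ⟨L, G, f, g, S, hG, hL⟩ := h.exists_isShortExact
    have hL' : IsGDimZero R L :=
      ih hL fun i ↦ S.extVanishes_left_left (hG.extVanishes i) (hM (i + 1))
    exact S.isGDimZero_right hL' hG (S.lcomp_surjective (hM 0))

theorem IsGDimZero.exists_embedding [IsNoetherianRing R] (h : IsGDimZero R G) :
    ∃ (q : ℕ) (ι : G →ₗ[R] (Fin q → R)), Function.Injective ι ∧
      Function.Surjective ι.dualMap ∧ IsGDimZero R ((Fin q → R) ⧸ LinearMap.range ι) := by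
  have : Module.Finite R G := h.1
  obtain ⟨q, s, hs⟩ := Submodule.fg_iff_exists_fin_generating_family.1
    (Module.Finite.fg_top (R := R) (M := Module.Dual R G))
  have ι_dual : Function.Surjective (LinearMap.pi s).dualMap := by
    rw [← LinearMap.range_eq_top, eq_top_iff, ← hs, Submodule.span_le]
    rintro _ ⟨j, rfl⟩
    exact ⟨LinearMap.proj j, rfl⟩
  have ι_injective : Function.Injective (LinearMap.pi s) := by
    refine (injective_iff_map_eq_zero _).2 fun x hx ↦ h.2.1.1 (LinearMap.ext fun φ ↦ ?_)
    obtain ⟨ψ, rfl⟩ := ι_dual φ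
    rw [map_zero, Module.Dual.eval_apply, LinearMap.dualMap_apply, hx, map_zero,
      LinearMap.zero_apply]
  exact ⟨q, LinearMap.pi s, ι_injective, ι_dual,
    (isShortExact_mkQ_range ι_injective).isGDimZero_right h (isGDimZero_of_projective _) ι_dual⟩

end GDimZero

section AuslanderBridger

open Abelian

variable {R : Type u} [CommRing R]

/-- The map `Ext^d(K, Y) → Hom(Y*, Ext^d(K, R))` sending `x` to `ψ ↦ ψ_*(x)`. -/
noncomputable def extDualEval (R : Type u) [CommRing R] (K Y : Type u) [AddCommGroup K]
    [Module R K] [AddCommGroup Y] [Module R Y] (d : ℕ) :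
    Ext (ModuleCat.of R K) (ModuleCat.of R Y) d →ₗ[R]
      Module.Dual R Y →ₗ[R] Ext (ModuleCat.of R K) (ModuleCat.of R R) d :=
  (extMap K d).flip

variable {K X Y L : Type u} [AddCommGroup K] [Module R K] [AddCommGroup X] [Module R X]
  [AddCommGroup Y] [Module R Y] [AddCommGroup L] [Module R L] {d : ℕ}

theorem extDualEval_apply (x : Ext (ModuleCat.of R K) (ModuleCat.of R Y) d)
    (ψ : Module.Dual R Y) : extDualEval R K Y d x ψ = extMap K d ψ x :=
  rfl

theorem extDualEval_extMap (f : Y →ₗ[R] X) (x : Ext (ModuleCat.of R K) (ModuleCat.of R Y) d) :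
    extDualEval R K X d (extMap K d f x) = extDualEval R K Y d x ∘ₗ f.dualMap := by
  ext ψ
  exact (LinearMap.congr_fun (extMap_comp d ψ f) x).symm

theorem extDualEval_pi_surjective (q : ℕ) :
    Function.Surjective (extDualEval R K (Fin q → R) d) := by
  intro θ
  refine ⟨∑ j, extMap K d (LinearMap.single R (fun _ ↦ R) j) (θ (LinearMap.proj j)),
    LinearMap.ext fun ψ ↦ ?_⟩
  have ψ_comp_single (j) : ψ ∘ₗ LinearMap.single R (fun _ ↦ R) j =
      ψ (Pi.single j 1) • LinearMap.id := by
    ext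
    simp
  have ψ_eq_sum : ψ = ∑ j, ψ (Pi.single j 1) • LinearMap.proj j := by
    ext j
    simp [Pi.single_apply]
  calc
    _ = ∑ j, ψ (Pi.single j 1) • θ (LinearMap.proj j) := by
      rw [extDualEval_apply, map_sum]
      refine Finset.sum_congr rfl fun j _ ↦ ?_
      rw [← LinearMap.comp_apply, ← extMap_comp, ψ_comp_single, map_smul, extMap_id,
        LinearMap.smul_apply, LinearMap.id_apply]
    _ = θ ψ := by
      conv_rhs => rw [ψ_eq_sum, map_sum]
      simp only [map_smul]

variable [IsNoetherianRing R]

theorem IsGDimZero.gradeGE (hY : IsGDimZero R Y) (hR : GradeGE R K R d) : GradeGE R K Y d := by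
  induction d generalizing Y with
  | zero => exact gradeGE_zero
  | succ d ih =>
    obtain ⟨q, ι, hι, -, hcoker⟩ := hY.exists_embedding
    exact (isShortExact_mkQ_range hι).gradeGE_left (hR.pi q) (ih hcoker (hR.mono d.le_succ))

theorem IsGDimZero.extDualEval_injective (hY : IsGDimZero R Y) (hR : GradeGE R K R d) :
    Function.Injective (extDualEval R K Y d) := by
  obtain ⟨q, ι, hι, -, hcoker⟩ := hY.exists_embedding
  refine (injective_iff_map_eq_zero _).2 fun x hx ↦
    (isShortExact_mkQ_range hι).extMap_injective_of_gradeGE (hcoker.gradeGE hR) ?_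
  rw [map_zero]
  refine eq_zero_of_extMap_proj_eq_zero fun j ↦ ?_
  rw [← extDualEval_apply, extDualEval_extMap, hx, LinearMap.zero_comp, LinearMap.zero_apply]

theorem IsGDimZero.extDualEval_surjective (hY : IsGDimZero R Y) (hR : GradeGE R K R d) :
    Function.Surjective (extDualEval R K Y d) := by
  intro θ
  obtain ⟨q, ι, hι, hι', hcoker⟩ := hY.exists_embedding
  have S := isShortExact_mkQ_range hι
  obtain ⟨w, hw⟩ := extDualEval_pi_surjective q (θ ∘ₗ ι.dualMap)
  have w_mem_ker : extMap K d (LinearMap.range ι).mkQ w = 0 := by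
    refine hcoker.extDualEval_injective hR ?_
    rw [extDualEval_extMap, hw, map_zero, LinearMap.comp_assoc, LinearMap.dualMap_comp_dualMap,
      S.comp_eq_zero]
    exact LinearMap.ext fun ψ ↦ (congrArg θ (LinearMap.comp_zero ψ)).trans (map_zero θ)
  obtain ⟨c, rfl⟩ := (S.exact_extMap d w).1 w_mem_ker
  refine ⟨c, LinearMap.ext fun ψ ↦ ?_⟩
  obtain ⟨ψ, rfl⟩ := hι' ψ
  exact LinearMap.congr_fun ((extDualEval_extMap ι c).symm.trans hw) ψ

end AuslanderBridger

section LocalAuslanderBridger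

open IsLocalRing Abelian

variable {R : Type u} [CommRing R] [IsLocalRing R]

theorem exists_linearMap_ne_zero_comp_eq_zero {W' W V : Type u} [AddCommGroup W'] [Module R W']
    [AddCommGroup W] [Module R W] [Module.Finite R W] [AddCommGroup V] [Module R V] [Nontrivial V]
    (hV : ∀ a ∈ maximalIdeal R, ∀ v : V, a • v = 0)
    {f : W' →ₗ[R] W} (hf : ¬ Function.Surjective f) :
    ∃ θ : W →ₗ[R] V, θ ≠ 0 ∧ θ ∘ₗ f = 0 := by
  obtain ⟨v, hv⟩ := exists_ne (0 : V)
  obtain ⟨N, hN, hfN⟩ :=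
    (eq_top_or_exists_le_coatom (LinearMap.range f)).resolve_left (by rwa [LinearMap.range_eq_top])
  obtain ⟨I, hI, ⟨e⟩⟩ :=
    isSimpleModule_iff_quot_maximal.1 (isSimpleModule_iff_isCoatom.2 hN : IsSimpleModule R (W ⧸ N))
  have I_le_ker : I ≤ LinearMap.ker (LinearMap.toSpanSingleton R V v) :=
    fun a ha ↦ hV a (eq_maximalIdeal hI ▸ ha) v
  refine ⟨I.liftQ (LinearMap.toSpanSingleton R V v) I_le_ker ∘ₗ e.toLinearMap ∘ₗ N.mkQ, ?_, ?_⟩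
  · intro hθ
    obtain ⟨w, hw⟩ := N.mkQ_surjective (e.symm (Submodule.Quotient.mk 1))
    have v_eq_zero := LinearMap.congr_fun hθ w
    simp only [LinearMap.comp_apply, hw, LinearEquiv.coe_coe, LinearEquiv.apply_symm_apply,
      Submodule.liftQ_apply, LinearMap.toSpanSingleton_apply, one_smul] at v_eq_zero
    exact hv v_eq_zero
  · ext x
    have : N.mkQ (f x) = 0 := (Submodule.Quotient.mk_eq_zero N).2 (hfN ⟨x, rfl⟩)
    simp only [LinearMap.comp_apply, this, map_zero, LinearMap.zero_apply]

variable [IsNoetherianRing R] {d : ℕ} {X Y L M : Type u} [AddCommGroup X] [Module R X]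
  [AddCommGroup Y] [Module R Y] [AddCommGroup L] [Module R L] [AddCommGroup M] [Module R M]

theorem IsShortExact.dualMap_surjective_of_gradeGE {f : Y →ₗ[R] X} {g : X →ₗ[R] L}
    (S : IsShortExact f g) (hY : IsGDimZero R Y) (hX : IsGDimZero R X)
    (hR : GradeGE R (R ⧸ maximalIdeal R) R d) (hd : ¬ ExtVanishes R d (R ⧸ maximalIdeal R) R)
    (hL : GradeGE R (R ⧸ maximalIdeal R) L d) : Function.Surjective f.dualMap := by
  have : Module.Finite R Y := hY.1
  have := not_subsingleton_iff_nontrivial.1 hd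
  by_contra hf
  obtain ⟨θ, hθ, hθf⟩ := exists_linearMap_ne_zero_comp_eq_zero
    (V := Ext (ModuleCat.of R (R ⧸ maximalIdeal R)) (ModuleCat.of R R) d)
    (fun a ha v ↦ smul_ext_quotient_eq_zero ha v) hf
  obtain ⟨c, rfl⟩ := hY.extDualEval_surjective hR θ
  have c_eq_zero : c = 0 := by
    refine S.extMap_injective_of_gradeGE hL (hX.extDualEval_injective hR ?_)
    rw [extDualEval_extMap, hθf, map_zero, map_zero]
  exact hθ (by rw [c_eq_zero, map_zero])

theorem GDimLE.isGDimZero_of_gradeGE {s : ℕ} (hM : GDimLE R s (ModuleCat.of R M))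
    (hR : GradeGE R (R ⧸ maximalIdeal R) R d) (hd : ¬ ExtVanishes R d (R ⧸ maximalIdeal R) R)
    (hMd : GradeGE R (R ⧸ maximalIdeal R) M d) : IsGDimZero R M := by
  induction s generalizing M with
  | zero => exact hM
  | succ s ih =>
    obtain ⟨L, G, f, g, S, hG, hL⟩ := hM.exists_isShortExact
    have hL' : IsGDimZero R L :=
      ih hL (S.gradeGE_left (hG.gradeGE hR) (hMd.mono (Nat.sub_le d 1)))
    exact S.isGDimZero_right hL' hG (S.dualMap_surjective_of_gradeGE hL' hG hR hd hMd)

/- The Auslander–Bridger inequality `Gdim M ≤ depth R - depth M`, for `M` of finite G-dimension. -/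
theorem GDimLE.extVanishes_of_gradeGE {s e : ℕ} (hM : GDimLE R s (ModuleCat.of R M))
    (hR : GradeGE R (R ⧸ maximalIdeal R) R d) (hd : ¬ ExtVanishes R d (R ⧸ maximalIdeal R) R)
    (hMd : GradeGE R (R ⧸ maximalIdeal R) M (d - e)) (i : ℕ) : ExtVanishes R (e + i + 1) M R := by
  induction s generalizing e M with
  | zero => exact IsGDimZero.extVanishes hM _
  | succ s ih =>
    cases e with
    | zero => exact (hM.isGDimZero_of_gradeGE hR hd hMd).extVanishes _
    | succ e =>
      obtain ⟨L, G, f, g, S, hG, hL⟩ := hM.exists_isShortExact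
      have hLd : GradeGE R (R ⧸ maximalIdeal R) L (d - e) :=
        S.gradeGE_left ((hG.gradeGE hR).mono (Nat.sub_le d e)) hMd
      rw [Nat.add_right_comm e 1 i]
      exact S.extVanishes_right_left (ih hL hLd) (hG.extVanishes _)

theorem GDimLE.gradeGE_of_not_extVanishes {s i : ℕ} (hM : GDimLE R s (ModuleCat.of R M))
    (hX : IsGDimZero R X) {f : M →ₗ[R] X} (hf : Function.Injective f)
    (hi : ¬ ExtVanishes R (i + 1) M R) : GradeGE R (R ⧸ maximalIdeal R) R (i + 2) := by
  classical
  by_contra hR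
  obtain ⟨t, ht, ht'⟩ : ∃ t < i + 2, ¬ ExtVanishes R t (R ⧸ maximalIdeal R) R := by
    simpa [GradeGE] using hR
  have ex : ∃ t, ¬ ExtVanishes R t (R ⧸ maximalIdeal R) R := ⟨t, ht'⟩
  have hd : GradeGE R (R ⧸ maximalIdeal R) R (Nat.find ex) :=
    fun t ht ↦ not_not.1 (Nat.find_min ex ht)
  have hdi : Nat.find ex < i + 2 := (Nat.find_le ht').trans_lt ht
  refine hi (hM.extVanishes_of_gradeGE hd (Nat.find_spec ex) (e := i) ?_ 0)
  obtain h0 | hpos := Nat.eq_zero_or_pos (Nat.find ex)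
  · exact gradeGE_zero.mono (by lia)
  · exact (GradeGE.of_injective hf ((hX.gradeGE hd).mono hpos)).mono (by lia)

end LocalAuslanderBridger

section Localization

variable {R : Type u} [CommRing R] (S : Submonoid R) {A B C M : Type u} [AddCommGroup A]
  [Module R A] [AddCommGroup B] [Module R B] [AddCommGroup C] [Module R C] [AddCommGroup M]
  [Module R M]

theorem IsShortExact.localize {f : A →ₗ[R] B} {g : B →ₗ[R] C} (h : IsShortExact f g) :
    IsShortExact (LocalizedModule.map S f) (LocalizedModule.map S g) :=
  ⟨LocalizedModule.map_injective S f h.injective, LocalizedModule.map_exact S f g h.exact,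
    LocalizedModule.map_surjective S g h.surjective⟩

/-- The canonical map `M* → (S⁻¹M)*` sending a functional to its extension to the localizations;
it is a localization map when `M` is finitely presented. -/
noncomputable abbrev dualLocalization (M : Type u) [AddCommGroup M] [Module R M] :
    Module.Dual R M →ₗ[R] Module.Dual (Localization S) (LocalizedModule S M) :=
  IsLocalizedModule.mapExtendScalars S (LocalizedModule.mkLinearMap S M)
    (Algebra.linearMap R (Localization S)) (Localization S)

theorem dualLocalization_mk_one (φ : Module.Dual R M) (m : M) :
    dualLocalization S M φ (LocalizedModule.mk m 1) = algebraMap R (Localization S) (φ m) :=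
  IsLocalizedModule.map_apply S (LocalizedModule.mkLinearMap S M)
    (Algebra.linearMap R (Localization S)) φ m

theorem dualLocalization_comp (f : A →ₗ[R] B) (φ : Module.Dual R B) :
    dualLocalization S A (φ ∘ₗ f) = dualLocalization S B φ ∘ₗ LocalizedModule.map S f := by
  apply LinearMap.restrictScalars_injective R
  refine IsLocalizedModule.linearMap_ext S (LocalizedModule.mkLinearMap S A)
    (Algebra.linearMap R (Localization S)) (LinearMap.ext fun a ↦ ?_)
  change dualLocalization S A (φ ∘ₗ f) (LocalizedModule.mk a 1) =
    dualLocalization S B φ (LocalizedModule.map S f (LocalizedModule.mk a 1))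
  rw [LocalizedModule.map_mk, dualLocalization_mk_one, dualLocalization_mk_one,
    LinearMap.comp_apply]

variable [IsNoetherianRing R]

theorem exists_smul_eq_dualLocalization [Module.Finite R M]
    (ψ : Module.Dual (Localization S) (LocalizedModule S M)) :
    ∃ (φ : Module.Dual R M) (s : S), (s : R) • ψ = dualLocalization S M φ := by
  have := Module.finitePresentation_of_finite R M
  obtain ⟨⟨φ, s⟩, h⟩ := IsLocalizedModule.surj S (dualLocalization S M) ψ
  exact ⟨φ, s, h⟩

theorem exists_smul_eq_of_dualLocalization_eq [Module.Finite R M] {φ ψ : Module.Dual R M}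
    (h : dualLocalization S M φ = dualLocalization S M ψ) :
    ∃ s : S, (s : R) • φ = (s : R) • ψ := by
  have := Module.finitePresentation_of_finite R M
  exact IsLocalizedModule.exists_of_eq (S := S) (f := dualLocalization S M) h

theorem dualMap_localizedMap_surjective [Module.Finite R A] {f : A →ₗ[R] B}
    (hf : Function.Surjective f.dualMap) :
    Function.Surjective (LocalizedModule.map S f).dualMap := by
  intro ψ
  obtain ⟨φ, s, hs⟩ := exists_smul_eq_dualLocalization S ψ
  obtain ⟨χ, rfl⟩ := hf φ
  have smul_mk_smul : (Localization.mk 1 s : Localization S) • (s : R) • ψ = ψ := by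
    rw [← algebraMap_smul (Localization S) (s : R) ψ, smul_smul,
      ← Localization.mk_one_eq_algebraMap, Localization.mk_mul, one_mul, mul_one,
      Localization.mk_self, one_smul]
  refine ⟨(Localization.mk 1 s : Localization S) • dualLocalization S B χ, ?_⟩
  rw [map_smul, ← smul_mk_smul, hs]
  exact congrArg _ (dualLocalization_comp S f χ).symm

theorem ExtVanishes.localize [Module.Finite R M] {i : ℕ} (h : ExtVanishes R (i + 1) M R) :
    ExtVanishes (Localization S) (i + 1) (LocalizedModule S M) (Localization S) := by
  induction i generalizing M with
  | zero =>
    obtain ⟨q, g, hg⟩ := Module.Finite.exists_fin' R M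
    have T := isShortExact_subtype_ker hg
    exact (T.localize S).extVanishes_one
      (dualMap_localizedMap_surjective S (T.lcomp_surjective h)) (.of_projective 0)
  | succ i ih =>
    obtain ⟨q, g, hg⟩ := Module.Finite.exists_fin' R M
    have T := isShortExact_subtype_ker hg
    exact (T.localize S).extVanishes_right_left
      (ih (T.extVanishes_left_left (.of_projective i) h)) (.of_projective (i + 1))

theorem bijective_dual_eval_localizedModule [Module.Finite R M]
    (h : Function.Bijective (Module.Dual.eval R M)) :
    Function.Bijective (Module.Dual.eval (Localization S) (LocalizedModule S M)) := by
  have := Module.finitePresentation_of_finite R M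
  have := Module.finitePresentation_of_finite R (Module.Dual R M)
  let bidual := IsLocalizedModule.mapExtendScalars S (dualLocalization S M)
    (Algebra.linearMap R (Localization S)) (Localization S)
  have eval_eq_map : (Module.Dual.eval (Localization S) (LocalizedModule S M)).restrictScalars R =
      IsLocalizedModule.map S (LocalizedModule.mkLinearMap S M) bidual (Module.Dual.eval R M) := by
    refine IsLocalizedModule.linearMap_ext S (LocalizedModule.mkLinearMap S M) bidual
      (LinearMap.ext fun m ↦ ?_)
    rw [LinearMap.comp_apply, LinearMap.comp_apply, IsLocalizedModule.map_apply]
    apply LinearMap.restrictScalars_injective R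
    refine IsLocalizedModule.linearMap_ext S (dualLocalization S M)
      (Algebra.linearMap R (Localization S)) (LinearMap.ext fun φ ↦ ?_)
    exact (dualLocalization_mk_one S φ m).trans (IsLocalizedModule.map_apply S
      (dualLocalization S M) (Algebra.linearMap R (Localization S)) (Module.Dual.eval R M m) φ).symm
  change Function.Bijective
    ((Module.Dual.eval (Localization S) (LocalizedModule S M)).restrictScalars R)
  rw [eval_eq_map]
  exact ⟨IsLocalizedModule.map_injective S _ _ _ h.1,
    IsLocalizedModule.map_surjective S _ _ _ h.2⟩

theorem IsGDimZero.localize (h : IsGDimZero R M) :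
    IsGDimZero (Localization S) (LocalizedModule S M) := by
  obtain ⟨hfin, hbij, hext, hextDual⟩ := isGDimZero_iff.1 h
  have := Module.finitePresentation_of_finite R M
  refine isGDimZero_iff.2 ⟨inferInstance, bijective_dual_eval_localizedModule S hbij,
    fun i ↦ (hext i).localize S, fun i ↦ ((hextDual i).localize S).congr_left ?_⟩
  exact IsLocalizedModule.mapEquiv S (LocalizedModule.mkLinearMap S (Module.Dual R M))
    (dualLocalization S M) (Localization S) (LinearEquiv.refl R _)

theorem GDimLE.localize {n : ℕ} (h : GDimLE R n (ModuleCat.of R M)) :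
    GDimLE (Localization S) n (ModuleCat.of (Localization S) (LocalizedModule S M)) := by
  induction n generalizing M with
  | zero => exact IsGDimZero.localize S h
  | succ n ih =>
    obtain ⟨L, G, f, g, T, hG, hL⟩ := h.exists_isShortExact
    exact (T.localize S).gDimLE_succ (hG.localize S) (ih hL)

end Localization

section AssociatedPrimes

open IsLocalRing

variable {R M : Type u} [CommRing R] [IsNoetherianRing R] [AddCommGroup M] [Module R M]

theorem not_gradeGE_one_of_mem_associatedPrimes {p : Ideal R} (hp : p ∈ associatedPrimes R M) :
    ¬ GradeGE R (R ⧸ p) M 1 := by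
  intro h
  obtain ⟨hprime, f, hf⟩ := (isAssociatedPrime_iff_exists_injective_linearMap p M).1 hp
  have := extVanishes_zero_iff.1 (h 0 one_pos)
  have : Nontrivial (R ⧸ p) := Ideal.Quotient.nontrivial_iff.2 hprime.ne_top
  obtain ⟨x, hx⟩ := exists_ne (0 : R ⧸ p)
  exact hx (hf (by rw [Subsingleton.elim f 0, LinearMap.zero_apply, LinearMap.zero_apply]))

theorem not_gradeGE_one_localization_of_mem_associatedPrimes {p : Ideal R} [p.IsPrime]
    (hp : p ∈ associatedPrimes R M) :
    ¬ GradeGE (Localization.AtPrime p)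
      (Localization.AtPrime p ⧸ maximalIdeal (Localization.AtPrime p))
      (LocalizedModule p.primeCompl M) 1 :=
  have : IsNoetherianRing (Localization.AtPrime p) :=
    IsLocalization.isNoetherianRing p.primeCompl _ inferInstance
  not_gradeGE_one_of_mem_associatedPrimes
    (Module.associatedPrimes.mem_associatedPrimes_atPrime_of_mem_associatedPrimes hp)

end AssociatedPrimes

/-- A resolution `⋯ → P 1 → P 0 → M → 0` of `M` by finitely generated projective modules, not
required to be minimal. -/
structure FinProjRes (R : Type u) [CommRing R] (M : Type u) [AddCommGroup M] [Module R M] where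
  P : ℕ → ModuleCat.{u} R
  projective : ∀ i, Module.Projective R (P i)
  finite : ∀ i, Module.Finite R (P i)
  d : (i : ℕ) → (P (i + 1) →ₗ[R] P i)
  ε : P 0 →ₗ[R] M
  surjective : Function.Surjective ε
  exact₀ : Function.Exact (d 0) ε
  exact : ∀ i, Function.Exact (d (i + 1)) (d i)

attribute [instance] FinProjRes.projective FinProjRes.finite

/-- The minimal resolution `F`, forgetting minimality. -/
def MinRes.toFinProjRes {R M : Type u} [CommRing R] [AddCommGroup M] [Module R M]
    (F : MinRes R M) : FinProjRes R M where
  P := F.P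
  projective := F.projective
  finite := F.finite
  d := F.d
  ε := F.ε
  surjective := F.surj
  exact₀ := LinearMap.exact_iff.2 F.exact0.symm
  exact i := LinearMap.exact_iff.2 (F.exact i).symm

namespace FinProjRes

variable {R M : Type u} [CommRing R] [AddCommGroup M] [Module R M]

/-- The resolution `⋯ → P 2 → P 1 → ΩM → 0` of the first syzygy `ΩM = ker ε`. -/
def tail (F : FinProjRes R M) : FinProjRes R (LinearMap.ker F.ε) where
  P j := F.P (j + 1)
  projective j := F.projective (j + 1)
  finite j := F.finite (j + 1)
  d j := F.d (j + 1)
  ε := (F.d 0).codRestrict _ F.exact₀.apply_apply_eq_zero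
  surjective := fun ⟨x, hx⟩ ↦ (F.exact₀ x).1 hx |>.imp fun _ hy ↦ Subtype.ext hy
  exact₀ x := by
    rw [← F.exact 0 x, ← Subtype.coe_inj]
    rfl
  exact j := F.exact (j + 1)

/-- The localized complex `⋯ → S⁻¹P 1 → S⁻¹P 0 → S⁻¹M → 0`. -/
noncomputable def localize (S : Submonoid R) (F : FinProjRes R M) :
    FinProjRes (Localization S) (LocalizedModule S M) where
  P j := .of _ (LocalizedModule S (F.P j))
  projective _ := inferInstanceAs (Module.Projective _ (LocalizedModule S _))
  finite _ := inferInstanceAs (Module.Finite _ (LocalizedModule S _))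
  d j := LocalizedModule.map S (F.d j)
  ε := LocalizedModule.map S F.ε
  surjective := LocalizedModule.map_surjective S _ F.surjective
  exact₀ := LocalizedModule.map_exact S _ _ F.exact₀
  exact j := LocalizedModule.map_exact S _ _ (F.exact j)

section ExtVanishes

variable {N : Type u} [AddCommGroup N] [Module R N]

theorem extVanishes_one_iff (F : FinProjRes R M) :
    ExtVanishes R 1 M N ↔ Function.Exact ((F.d 0).lcomp R N) ((F.d 1).lcomp R N) := by
  have T := isShortExact_subtype_ker F.surjective
  have tail_injective : Function.Injective (F.tail.ε.lcomp R N) :=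
    LinearMap.lcomp_injective_of_surjective _ F.tail.surjective
  have tail_exact : Function.Exact (F.tail.ε.lcomp R N) ((F.d 1).lcomp R N) :=
    LinearMap.exact_lcomp_of_exact_of_surjective N F.tail.exact₀ F.tail.surjective
  refine ⟨fun h φ ↦ (tail_exact φ).trans ⟨?_, ?_⟩, fun h ↦ ?_⟩
  · rintro ⟨χ, rfl⟩
    exact (T.lcomp_surjective h χ).imp fun ψ hψ ↦ congrArg (F.tail.ε.lcomp R N) hψ
  · exact fun ⟨ψ, hψ⟩ ↦ ⟨ψ ∘ₗ (LinearMap.ker F.ε).subtype, hψ⟩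
  · refine T.extVanishes_one (fun χ ↦ ?_) (.of_projective 0)
    obtain ⟨ψ, hψ⟩ := (h _).1 (tail_exact.apply_apply_eq_zero χ)
    exact ⟨ψ, tail_injective hψ⟩

theorem extVanishes_succ_iff (F : FinProjRes R M) (i : ℕ) :
    ExtVanishes R (i + 1) M N ↔
      Function.Exact ((F.d i).lcomp R N) ((F.d (i + 1)).lcomp R N) := by
  induction i generalizing M with
  | zero => exact F.extVanishes_one_iff
  | succ i ih =>
    have T := isShortExact_subtype_ker F.surjective
    refine .trans ⟨fun h ↦ ?_, fun h ↦ ?_⟩ (ih F.tail)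
    · exact T.extVanishes_left_left (.of_projective i) h
    · exact T.extVanishes_right_left h (.of_projective (i + 1))

end ExtVanishes

/-- The image `B j` of `P j* → P (j + 1)*`. For the minimal resolution of `M`, `B 0` is `λM`. -/
def dualRange (F : FinProjRes R M) (j : ℕ) : ModuleCat.{u} R :=
  .of R (LinearMap.range (F.d j).dualMap)

/-- The inclusion `B j → P (j + 1)*`. -/
def dualRangeIncl (F : FinProjRes R M) (j : ℕ) : F.dualRange j →ₗ[R] Module.Dual R (F.P (j + 1)) :=
  (LinearMap.range (F.d j).dualMap).subtype

/-- The map `P (j + 1)* → B (j + 1)` induced by `d (j + 1)`. -/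
def dualRangeProj (F : FinProjRes R M) (j : ℕ) :
    Module.Dual R (F.P (j + 1)) →ₗ[R] F.dualRange (j + 1) :=
  (F.d (j + 1)).dualMap.rangeRestrict

/-- The cokernel of `P j* → P (j + 1)*`; for the minimal resolution of `M` this is `Tr Ω^j M`. -/
abbrev dualCoker (F : FinProjRes R M) (j : ℕ) : Type u :=
  Module.Dual R (F.P (j + 1)) ⧸ LinearMap.range (F.d j).dualMap

theorem dualRangeIncl_injective (F : FinProjRes R M) (j : ℕ) :
    Function.Injective (F.dualRangeIncl j) :=
  Subtype.val_injective

theorem isShortExact_dualRangeIncl_mkQ (F : FinProjRes R M) (j : ℕ) :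
    IsShortExact (F.dualRangeIncl j) (LinearMap.range (F.d j).dualMap).mkQ :=
  ⟨F.dualRangeIncl_injective j, LinearMap.exact_subtype_mkQ _, Submodule.mkQ_surjective _⟩

theorem isShortExact_dualRangeIncl_dualRangeProj (F : FinProjRes R M) {j : ℕ}
    (h : ExtVanishes R (j + 1) M R) :
    IsShortExact (F.dualRangeIncl j) (F.dualRangeProj j) where
  injective := F.dualRangeIncl_injective j
  exact φ := by
    refine Subtype.ext_iff.trans (((F.extVanishes_succ_iff j).1 h φ).trans ⟨?_, ?_⟩)
    · exact fun ⟨ψ, hψ⟩ ↦ ⟨⟨φ, ψ, hψ⟩, rfl⟩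
    · rintro ⟨⟨_, ψ, rfl⟩, rfl⟩
      exact ⟨ψ, rfl⟩
  surjective := LinearMap.surjective_rangeRestrict _

/-- `Ext^{a+1}(M, R)`, as the submodule of classes of cocycles in `P (a + 1)* ⧸ B a`. -/
def extSubmodule (F : FinProjRes R M) (a : ℕ) : Submodule R (F.dualCoker a) :=
  (LinearMap.ker (F.d (a + 1)).dualMap).map (LinearMap.range (F.d a).dualMap).mkQ

theorem extSubmodule_ne_bot (F : FinProjRes R M) {a : ℕ} (h : ¬ ExtVanishes R (a + 1) M R) :
    F.extSubmodule a ≠ ⊥ := by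
  rw [F.extVanishes_succ_iff] at h
  contrapose! h with extSubmodule_eq_bot
  refine fun φ ↦ ⟨fun hφ ↦ ?_, ?_⟩
  · have mkQ_mem : (LinearMap.range (F.d a).dualMap).mkQ φ ∈ F.extSubmodule a :=
      Submodule.mem_map_of_mem hφ
    rw [extSubmodule_eq_bot] at mkQ_mem
    exact (Submodule.Quotient.mk_eq_zero _).1 mkQ_mem
  · rintro ⟨ψ, rfl⟩
    ext x
    exact (congrArg ψ ((F.exact a).apply_apply_eq_zero x)).trans (map_zero ψ)

variable [IsNoetherianRing R] (F : FinProjRes R M)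

section Grade

variable {S : Submonoid R} {K : Type u} [AddCommGroup K] [Module (Localization S) K] {d : ℕ}

theorem gradeGE_localized_dual (hR : GradeGE (Localization S) K (Localization S) d) (j : ℕ) :
    GradeGE (Localization S) K (LocalizedModule S (Module.Dual R (F.P j))) d :=
  have : IsNoetherianRing (Localization S) := IsLocalization.isNoetherianRing S _ inferInstance
  ((isGDimZero_of_projective (Module.Dual R (F.P j))).localize S).gradeGE hR

theorem gradeGE_localized_dualRange {n j : ℕ} (hE : ∀ i, i + 1 < n → ExtVanishes R (i + 1) M R)
    (hR : GradeGE (Localization S) K (Localization S) d) (hdj : d + j ≤ n) :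
    GradeGE (Localization S) K (LocalizedModule S (F.dualRange j)) d := by
  have hP := F.gradeGE_localized_dual hR (j + 1)
  induction d generalizing j with
  | zero => exact gradeGE_zero
  | succ d ih =>
    rcases d.eq_zero_or_pos with rfl | hd
    · exact .of_injective (LocalizedModule.map_injective S _ (F.dualRangeIncl_injective j)) hP
    · have T := (F.isShortExact_dualRangeIncl_dualRangeProj (hE j (by lia))).localize S
      have hR' := hR.mono d.le_succ
      exact T.gradeGE_left hP (ih hR' (by lia) (F.gradeGE_localized_dual hR' _))

theorem gradeGE_localized_dualRange_of_zero {a : ℕ} (hE : ∀ j < a, ExtVanishes R (j + 1) M R)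
    (hR : GradeGE (Localization S) K (Localization S) (d + a))
    (hB : GradeGE (Localization S) K (LocalizedModule S (F.dualRange 0)) (d + a)) :
    GradeGE (Localization S) K (LocalizedModule S (F.dualRange a)) d := by
  induction a generalizing d with
  | zero => exact hB
  | succ a ih =>
    rw [← Nat.succ_add_eq_add_succ] at hR hB
    have T := (F.isShortExact_dualRangeIncl_dualRangeProj (hE a a.lt_succ_self)).localize S
    exact T.gradeGE_right (F.gradeGE_localized_dual (hR.mono (by lia)) _)
      (ih (fun j hj ↦ hE j (by lia)) hR hB)

end Grade

theorem exists_smul_mem_dualRange {S : Submonoid R} {a : ℕ}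
    (h : ExtVanishes (Localization S) (a + 1) (LocalizedModule S M) (Localization S))
    {φ : Module.Dual R (F.P (a + 1))} (hφ : φ ∘ₗ F.d (a + 1) = 0) :
    ∃ s : S, (s : R) • φ ∈ LinearMap.range (F.d a).dualMap := by
  have localized_cocycle :
      dualLocalization S _ φ ∘ₗ LocalizedModule.map S (F.d (a + 1)) = 0 := by
    rw [← dualLocalization_comp, hφ, map_zero]
  obtain ⟨ψ, hψ⟩ := (((F.localize S).extVanishes_succ_iff a).1 h
    (dualLocalization S _ φ)).1 localized_cocycle
  obtain ⟨χ, s, hs⟩ := exists_smul_eq_dualLocalization S ψ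
  have localized_eq : dualLocalization S _ (χ ∘ₗ F.d a) = dualLocalization S _ ((s : R) • φ) := by
    rw [dualLocalization_comp, ← hs, map_smul, ← hψ]
    rfl
  obtain ⟨t, ht⟩ := exists_smul_eq_of_dualLocalization_eq S localized_eq
  refine ⟨t * s, ?_⟩
  rw [Submonoid.coe_mul, mul_smul, ← ht]
  exact Submodule.smul_mem _ _ ⟨χ, rfl⟩

theorem exists_mem_associatedPrimes_not_extVanishes {a : ℕ} (h : ¬ ExtVanishes R (a + 1) M R) :
    ∃ (p : Ideal R) (_ : p.IsPrime),
      p ∈ associatedPrimes R (F.dualCoker a) ∧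
      ¬ ExtVanishes (Localization.AtPrime p) (a + 1) (LocalizedModule p.primeCompl M)
        (Localization.AtPrime p) := by
  have := Submodule.nontrivial_iff_ne_bot.2 (F.extSubmodule_ne_bot h)
  obtain ⟨p, hp⟩ := associatedPrimes.nonempty R (F.extSubmodule a)
  obtain ⟨hprime, ⟨_, φ, hφ, rfl⟩, hcolon⟩ := isAssociatedPrime_iff.1 hp
  refine ⟨p, hprime, hp.map_of_injective (F.extSubmodule a).subtype Subtype.val_injective, ?_⟩
  intro hvan
  obtain ⟨s, hs⟩ := F.exists_smul_mem_dualRange hvan hφ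
  refine s.2 (hcolon.ge (Submodule.mem_colon_singleton.2 ?_))
  exact Subtype.ext ((Submodule.Quotient.mk_eq_zero _).2 hs)

end FinProjRes

section Stilde

open IsLocalRing

variable {R M : Type u} [CommRing R] [AddCommGroup M] [Module R M]

theorem stilde_iff_gradeGE {n : ℕ} :
    Stilde R n M ↔ ∀ (p : Ideal R) [p.IsPrime], ∀ d ≤ n,
      GradeGE (Localization.AtPrime p)
        (Localization.AtPrime p ⧸ maximalIdeal (Localization.AtPrime p))
        (Localization.AtPrime p) d →
      GradeGE (Localization.AtPrime p)
        (Localization.AtPrime p ⧸ maximalIdeal (Localization.AtPrime p))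
        (LocalizedModule p.primeCompl M) d := by
  refine forall₂_congr fun p _ ↦ ?_
  rw [← ENat.forall_natCast_le_iff_le]
  refine forall_congr' fun d ↦ ?_
  rw [le_min_iff, and_imp, Nat.cast_le]
  exact imp_congr_right fun _ ↦ imp_congr le_edepth_iff le_edepth_iff

namespace FinProjRes

variable [IsNoetherianRing R] (F : FinProjRes R M) {n : ℕ}

theorem stilde_dualRange_zero (hE : ∀ i, i + 1 < n → ExtVanishes R (i + 1) M R) :
    Stilde R n (F.dualRange 0) :=
  stilde_iff_gradeGE.2 fun _ _ _ hd hR ↦ F.gradeGE_localized_dualRange hE hR hd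

theorem gradeGE_localized_dualCoker {S : Submonoid R} {K : Type u} [AddCommGroup K]
    [Module (Localization S) K] {a d : ℕ} (hE : ∀ j < a, ExtVanishes R (j + 1) M R)
    (hR : GradeGE (Localization S) K (Localization S) (d + 1 + a))
    (hB : GradeGE (Localization S) K (LocalizedModule S (F.dualRange 0)) (d + 1 + a)) :
    GradeGE (Localization S) K (LocalizedModule S (F.dualCoker a)) d :=
  ((F.isShortExact_dualRangeIncl_mkQ a).localize S).gradeGE_right
    (F.gradeGE_localized_dual (hR.mono (by lia)) _)
    (F.gradeGE_localized_dualRange_of_zero hE hR hB)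

theorem extVanishes_of_stilde {X : Type u} [AddCommGroup X] [Module R X] (hX : IsGDimZero R X)
    {f : M →ₗ[R] X} (hf : Function.Injective f) {s : ℕ} (hM : GDimLE R s (ModuleCat.of R M))
    (hS : Stilde R n (F.dualRange 0)) (i : ℕ) (hi : i + 1 < n) : ExtVanishes R (i + 1) M R := by
  induction i using Nat.strong_induction_on with | _ a ih
  by_contra ha
  obtain ⟨p, hp, p_mem, ha_p⟩ := F.exists_mem_associatedPrimes_not_extVanishes ha
  have : IsNoetherianRing (Localization.AtPrime p) :=
    IsLocalization.isNoetherianRing p.primeCompl _ inferInstance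
  have hR := (hM.localize p.primeCompl).gradeGE_of_not_extVanishes (hX.localize p.primeCompl)
    (LocalizedModule.map_injective p.primeCompl f hf) ha_p
  have hB := stilde_iff_gradeGE.1 hS p (a + 2) (by lia) hR
  rw [add_comm a 2] at hR hB
  exact not_gradeGE_one_localization_of_mem_associatedPrimes p_mem
    (F.gradeGE_localized_dualCoker (fun j hj ↦ ih j hj (by lia)) hR hB)

end FinProjRes

end Stilde

section GDim

variable {R M : Type u} [CommRing R] [AddCommGroup M] [Module R M] {n : ℕ}

theorem gDimLE_of_gDim_eq (h : GDim R M = n) : GDimLE R n (ModuleCat.of R M) := by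
  have nonempty : {m : ℕ∞ | ∃ k : ℕ, m = k ∧ GDimLE R k (ModuleCat.of R M)}.Nonempty := by
    refine Set.nonempty_iff_ne_empty.2 fun h_empty ↦ ENat.natCast_ne_top n ?_
    rw [← h, GDim, h_empty, sInf_empty]
  obtain ⟨k, hk, hk'⟩ := csInf_mem nonempty
  exact Nat.cast_injective (h.symm.trans hk) ▸ hk'

theorem le_rgr_iff : (n : ℕ∞) ≤ rgr R M ↔ ∀ i, i + 1 < n → ExtVanishes R (i + 1) M R := by
  simp only [rgr, le_sInf_iff, Set.mem_ofPred_eq]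
  constructor
  · intro h i hi
    by_contra hvan
    exact hi.not_ge (Nat.cast_le.1
      (h _ ⟨i + 1, rfl, i.succ_pos, mt subsingleton_extM_iff.1 hvan⟩))
  · rintro h _ ⟨_ | i, rfl, hpos, hvan⟩
    · exact absurd hpos (lt_irrefl 0)
    · exact Nat.cast_le.2 (not_lt.1 fun hi ↦ hvan (subsingleton_extM_iff.2 (h i hi)))

theorem rgr_le_of_gDim_eq (hn : 0 < n) (h : GDim R M = n) :
    rgr R M ≤ n := by
  have hM := gDimLE_of_gDim_eq h
  have not_isGDimZero : ¬ IsGDimZero R M := fun h_zero ↦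
    hn.not_ge (Nat.cast_le.1 (h.ge.trans (sInf_le ⟨0, rfl, h_zero⟩)))
  refine ENat.forall_natCast_le_iff_le.1 fun m hm ↦ Nat.cast_le.2 (not_lt.1 fun hnm ↦ ?_)
  rw [le_rgr_iff] at hm
  refine not_isGDimZero (hM.isGDimZero fun i ↦ ?_)
  rcases lt_or_ge i n with hi | hi
  · exact hm i (by lia)
  · simpa only [Nat.add_sub_cancel' hi] using hM.extVanishes (i - n)

theorem rgr_eq_gDim_iff (hn : 0 < n) (h : GDim R M = n) :
    rgr R M = GDim R M ↔ ∀ i, i + 1 < n → ExtVanishes R (i + 1) M R := by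
  rw [h, ← le_rgr_iff]
  exact (rgr_le_of_gDim_eq hn h).ge_iff_eq.symm

end GDim

theorem IsHorizontallyLinked.isKthSyzygy_one {R M : Type u} [CommRing R] [AddCommGroup M]
    [Module R M] (h : IsHorizontallyLinked R M) : IsKthSyzygy R 1 (ModuleCat.of R M) := by
  obtain ⟨F, G, ⟨e⟩⟩ := h
  have := G.projective 1
  have := G.finite 1
  exact ⟨.of R (Module.Dual R (G.P 1)), G.toFinProjRes.dualRangeIncl 0 ∘ₗ e.symm.toLinearMap,
    inferInstanceAs (Module.Projective R (Module.Dual R (G.P 1))),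
    inferInstanceAs (Module.Finite R (Module.Dual R (G.P 1))),
    (G.toFinProjRes.dualRangeIncl_injective 0).comp e.symm.injective, trivial⟩

theorem stmt12_general {R M : Type u} [CommRing R] [IsNoetherianRing R] [AddCommGroup M]
    [Module R M] (F : FinProjRes R M) (hM : IsKthSyzygy R 1 (ModuleCat.of R M)) {n : ℕ}
    (hn : 0 < n) (hG : GDim R M = n) : rgr R M = GDim R M ↔ Stilde R n (F.dualRange 0) := by
  obtain ⟨P, f, _, _, hf, -⟩ := hM
  rw [rgr_eq_gDim_iff hn hG]
  exact ⟨F.stilde_dualRange_zero,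
    F.extVanishes_of_stilde (isGDimZero_of_projective P) hf (gDimLE_of_gDim_eq hG)⟩

section Statements

variable (R : Type u) [CommRing R] [IsNoetherianRing R]

theorem stmt12 (M : Type u) [AddCommGroup M] [Module R M] [Module.Finite R M]
    (F : MinRes R M) (hHL : IsHorizontallyLinked R M)
    (n : ℕ) (h0 : 0 < n) (hG : GDim R M = (n : ℕ∞)) :
    rgr R M = GDim R M ↔ Stilde R n F.lambdaMod :=
  stmt12_general F.toFinProjRes hHL.isKthSyzygy_one h0 hG

end Statements
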